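/- arXiv:2006.13572 — 2 statements merged into one kernel-verified Lean document; each statement's English description precedes it below -/
import Mathlib

section
/- Under the hypotheses of the convergence part of Theorem 3 (ψ₁,…,ψ_M continuous and linearly independent on [0,2π]; h₀ > 0; W_e, W_u, W_{Δu} continuous nonnegative with W_e pointwise positive on [0,2π] or W_u pointwise positive on [0,2π]; iteration θ_{j+1} = Q_ψ θ_j + L_ψ (c − h₀ θ_j) with fixed point θ*), the sequence (θ_j) is monotonically convergent in the weighted norm ‖x‖_{M_ψ} = √(xᵀ M_ψ x): for every j, ‖θ_{j+1} − θ*‖_{M_ψ} ≤ ‖θ_j − θ*‖_{M_ψ}, with strict inequality whenever θ_j ≠ θ*. -/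
open Matrix Finset intervalIntegral

/-- The weighted Gram matrix of the basis functions `ψ` with weight `w`:
`(gram M ψ w) k l = ∫₀^{2π} w(α) ψ_k(α) ψ_l(α) dα`. -/
noncomputable def gram (M : ℕ) (ψ : Fin M → ℝ → ℝ) (w : ℝ → ℝ) :
    Matrix (Fin M) (Fin M) ℝ :=
  Matrix.of fun k l => ∫ α in (0:ℝ)..(2 * Real.pi), w α * ψ k α * ψ l α

/-!
Write `A = G(h₀² W_e + W_u)` and `D = G(W_Δu)`, so that `M_ψ = A + D` with `A` positive definite and
`D` positive semidefinite. Consecutive errors `x = θ_j - θ*` and `y = θ_{j+1} - θ*` satisfy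
`M_ψ y = D x`, and for any such pair
`xᵀ M_ψ x = yᵀ M_ψ y + xᵀ A x + yᵀ A y + (x - y)ᵀ D (x - y)`.
-/

section MatrixContraction

variable {n R : Type*} [Fintype n] [Ring R] [StarRing R] {A D : Matrix n n R} {x y : n → R}

lemma star_dotProduct_add_mulVec_eq_of_mulVec_eq (hA : A.IsHermitian) (hD : D.IsHermitian)
    (h : (A + D) *ᵥ y = D *ᵥ x) :
    star x ⬝ᵥ ((A + D) *ᵥ x) = star y ⬝ᵥ ((A + D) *ᵥ y) +
      (star x ⬝ᵥ (A *ᵥ x) + (star y ⬝ᵥ (A *ᵥ y) + star (x - y) ⬝ᵥ (D *ᵥ (x - y)))) := by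
  have hyDx : star y ⬝ᵥ (D *ᵥ x) = star y ⬝ᵥ (A *ᵥ y) + star y ⬝ᵥ (D *ᵥ y) := by
    rw [← h, add_mulVec, dotProduct_add]
  have hxDy : star x ⬝ᵥ (D *ᵥ y) = star y ⬝ᵥ (A *ᵥ y) + star y ⬝ᵥ (D *ᵥ y) := by
    calc star x ⬝ᵥ (D *ᵥ y) = star (D *ᵥ x) ⬝ᵥ y := by
          rw [star_mulVec, hD.eq, dotProduct_mulVec]
      _ = star ((A + D) *ᵥ y) ⬝ᵥ y := by rw [h]
      _ = star y ⬝ᵥ ((A + D) *ᵥ y) := by rw [star_mulVec, (hA.add hD).eq, dotProduct_mulVec]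
      _ = star y ⬝ᵥ (A *ᵥ y) + star y ⬝ᵥ (D *ᵥ y) := by rw [add_mulVec, dotProduct_add]
  simp only [add_mulVec, mulVec_sub, dotProduct_add, dotProduct_sub, star_sub, sub_dotProduct,
    hyDx, hxDy]
  abel

variable [PartialOrder R] [StarOrderedRing R]

lemma star_dotProduct_add_mulVec_le_of_mulVec_eq (hA : A.PosSemidef) (hD : D.PosSemidef)
    (h : (A + D) *ᵥ y = D *ᵥ x) :
    star y ⬝ᵥ ((A + D) *ᵥ y) ≤ star x ⬝ᵥ ((A + D) *ᵥ x) := by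
  rw [star_dotProduct_add_mulVec_eq_of_mulVec_eq hA.isHermitian hD.isHermitian h]
  exact le_add_of_nonneg_right <| add_nonneg (hA.dotProduct_mulVec_nonneg x) <|
    add_nonneg (hA.dotProduct_mulVec_nonneg y) (hD.dotProduct_mulVec_nonneg (x - y))

lemma star_dotProduct_add_mulVec_lt_of_mulVec_eq (hA : A.PosDef) (hD : D.PosSemidef)
    (h : (A + D) *ᵥ y = D *ᵥ x) (hx : x ≠ 0) :
    star y ⬝ᵥ ((A + D) *ᵥ y) < star x ⬝ᵥ ((A + D) *ᵥ x) := by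
  rw [star_dotProduct_add_mulVec_eq_of_mulVec_eq hA.isHermitian hD.isHermitian h]
  exact lt_add_of_pos_right _ <| add_pos_of_pos_of_nonneg (hA.dotProduct_mulVec_pos hx) <|
    add_nonneg (hA.posSemidef.dotProduct_mulVec_nonneg y) (hD.dotProduct_mulVec_nonneg (x - y))

end MatrixContraction

lemma mul_add_pos_of_pos_or_pos {R : Type*} [Semiring R] [PartialOrder R] [IsStrictOrderedRing R]
    {a b c : R} (ha : 0 < a) (hb : 0 ≤ b) (hc : 0 ≤ c) (h : 0 < b ∨ 0 < c) : 0 < a * b + c :=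
  h.elim (fun hb => add_pos_of_pos_of_nonneg (mul_pos ha hb) hc)
    (add_pos_of_nonneg_of_pos (mul_nonneg ha.le hb))

lemma affine_feedback_sub_affine_feedback {m n R : Type*} [Fintype n] [CommRing R]
    (Q L : Matrix m n R) (h : R) (c x y : n → R) :
    (Q *ᵥ x + L *ᵥ (c - h • x)) - (Q *ᵥ y + L *ᵥ (c - h • y)) = (Q - h • L) *ᵥ (x - y) := by
  simp only [sub_mulVec, smul_mulVec, mulVec_sub, mulVec_smul]
  abel

section Gram

variable {M : ℕ} {ψ : Fin M → ℝ → ℝ} {v w : ℝ → ℝ}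

lemma intervalIntegrable_gram_integrand
    (hψ : ∀ k, ContinuousOn (ψ k) (Set.Icc 0 (2 * Real.pi)))
    (hw : ContinuousOn w (Set.Icc 0 (2 * Real.pi))) (k l : Fin M) :
    IntervalIntegrable (fun α => w α * ψ k α * ψ l α) MeasureTheory.volume 0 (2 * Real.pi) :=
  ((hw.mul (hψ k)).mul (hψ l)).intervalIntegrable_of_Icc Real.two_pi_pos.le

lemma gram_add (hψ : ∀ k, ContinuousOn (ψ k) (Set.Icc 0 (2 * Real.pi)))
    (hv : ContinuousOn v (Set.Icc 0 (2 * Real.pi)))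
    (hw : ContinuousOn w (Set.Icc 0 (2 * Real.pi))) :
    gram M ψ (fun α => v α + w α) = gram M ψ v + gram M ψ w := by
  ext k l
  simp only [_root_.gram, of_apply, Matrix.add_apply, add_mul]
  exact integral_add (intervalIntegrable_gram_integrand hψ hv k l)
    (intervalIntegrable_gram_integrand hψ hw k l)

lemma gram_const_mul (a : ℝ) : gram M ψ (fun α => a * w α) = a • gram M ψ w := by
  ext k l
  simp only [_root_.gram, of_apply, Matrix.smul_apply, smul_eq_mul, mul_assoc,
    intervalIntegral.integral_const_mul]

lemma gram_isHermitian : (gram M ψ w).IsHermitian := by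
  ext k l
  simp only [_root_.gram, conjTranspose_apply, of_apply, star_trivial, mul_right_comm]

lemma dotProduct_gram_mulVec (hψ : ∀ k, ContinuousOn (ψ k) (Set.Icc 0 (2 * Real.pi)))
    (hw : ContinuousOn w (Set.Icc 0 (2 * Real.pi))) (x y : Fin M → ℝ) :
    x ⬝ᵥ (gram M ψ w *ᵥ y) =
      ∫ α in (0 : ℝ)..(2 * Real.pi), w α * (∑ k, x k * ψ k α) * ∑ l, y l * ψ l α := by
  have hterm (k l : Fin M) : IntervalIntegrable (fun α => x k * (w α * ψ k α * ψ l α * y l))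
      MeasureTheory.volume 0 (2 * Real.pi) :=
    ((intervalIntegrable_gram_integrand hψ hw k l).mul_const _).const_mul _
  calc x ⬝ᵥ (gram M ψ w *ᵥ y)
      = ∑ k, ∑ l, ∫ α in (0 : ℝ)..(2 * Real.pi), x k * (w α * ψ k α * ψ l α * y l) := by
        simp only [dotProduct, mulVec, _root_.gram, of_apply, mul_sum,
          intervalIntegral.integral_const_mul, intervalIntegral.integral_mul_const]
    _ = ∫ α in (0 : ℝ)..(2 * Real.pi), ∑ k, ∑ l, x k * (w α * ψ k α * ψ l α * y l) := by
        simp only [← Fintype.sum_prod_type']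
        exact (integral_finsetSum fun p _ => hterm p.1 p.2).symm
    _ = ∫ α in (0 : ℝ)..(2 * Real.pi), w α * (∑ k, x k * ψ k α) * ∑ l, y l * ψ l α := by
        refine integral_congr fun α _ => ?_
        rw [mul_assoc, sum_mul_sum]
        simp only [mul_sum]
        exact sum_congr rfl fun k _ => sum_congr rfl fun l _ => by ring

lemma gram_posSemidef (hψ : ∀ k, ContinuousOn (ψ k) (Set.Icc 0 (2 * Real.pi)))
    (hw : ContinuousOn w (Set.Icc 0 (2 * Real.pi)))
    (hw₀ : ∀ α ∈ Set.Icc 0 (2 * Real.pi), 0 ≤ w α) : (gram M ψ w).PosSemidef := by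
  refine .of_dotProduct_mulVec_nonneg gram_isHermitian fun x => ?_
  rw [star_trivial, dotProduct_gram_mulVec hψ hw]
  refine integral_nonneg Real.two_pi_pos.le fun α hα => ?_
  rw [mul_assoc]
  exact mul_nonneg (hw₀ α hα) (mul_self_nonneg _)

lemma gram_posDef (hψ : ∀ k, ContinuousOn (ψ k) (Set.Icc 0 (2 * Real.pi)))
    (hli : ∀ x : Fin M → ℝ,
      (∀ α ∈ Set.Icc 0 (2 * Real.pi), ∑ k, x k * ψ k α = 0) → x = 0)
    (hw : ContinuousOn w (Set.Icc 0 (2 * Real.pi)))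
    (hw₀ : ∀ α ∈ Set.Icc 0 (2 * Real.pi), 0 < w α) : (gram M ψ w).PosDef := by
  refine .of_dotProduct_mulVec_pos gram_isHermitian fun x hx => ?_
  obtain ⟨α, hα, hne⟩ : ∃ α ∈ Set.Icc 0 (2 * Real.pi), ∑ k, x k * ψ k α ≠ 0 := by
    contrapose! hx
    exact hli x hx
  have hcont : ContinuousOn (fun α => ∑ k, x k * ψ k α) (Set.Icc 0 (2 * Real.pi)) :=
    continuousOn_finsetSum _ fun k _ => continuousOn_const.mul (hψ k)
  rw [star_trivial, dotProduct_gram_mulVec hψ hw]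
  simp only [mul_assoc]
  exact integral_pos Real.two_pi_pos (hw.mul (hcont.mul hcont))
    (fun β hβ => mul_nonneg (hw₀ β (Set.Ioc_subset_Icc_self hβ)).le (mul_self_nonneg _))
    ⟨α, hα, mul_pos (hw₀ α hα) (mul_self_pos.mpr hne)⟩

lemma mul_gram_sub_smul_mul_gram {n : Type*} (P : Matrix n (Fin M) ℝ) (h : ℝ)
    (hψ : ∀ k, ContinuousOn (ψ k) (Set.Icc 0 (2 * Real.pi)))
    (hv : ContinuousOn v (Set.Icc 0 (2 * Real.pi)))
    (hw : ContinuousOn w (Set.Icc 0 (2 * Real.pi))) :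
    P * gram M ψ (fun α => h ^ 2 * v α + w α) - h • (P * gram M ψ (fun α => h * v α)) =
      P * gram M ψ w := by
  rw [gram_add hψ (hv.const_mul (h ^ 2)) hw, gram_const_mul, gram_const_mul, Matrix.mul_add,
    Matrix.mul_smul, Matrix.mul_smul, smul_smul, ← sq, add_sub_cancel_left]

end Gram

theorem ilc_monotonic_convergence_general (M : ℕ) (ψ : Fin M → ℝ → ℝ)
    (hψ : ∀ k, ContinuousOn (ψ k) (Set.Icc 0 (2 * Real.pi)))
    (hli : ∀ x : Fin M → ℝ,
      (∀ α ∈ Set.Icc 0 (2 * Real.pi), ∑ k, x k * ψ k α = 0) → x = 0)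
    (h₀ : ℝ) (We Wu WΔu : ℝ → ℝ)
    (hWec : ContinuousOn We (Set.Icc 0 (2 * Real.pi)))
    (hWuc : ContinuousOn Wu (Set.Icc 0 (2 * Real.pi)))
    (hWΔc : ContinuousOn WΔu (Set.Icc 0 (2 * Real.pi)))
    (hpos : ∀ α ∈ Set.Icc 0 (2 * Real.pi), 0 < h₀ ^ 2 * We α + Wu α)
    (hWΔ : ∀ α ∈ Set.Icc 0 (2 * Real.pi), 0 ≤ WΔu α)
    (c : Fin M → ℝ)
    (Mψ Qψ Lψ : Matrix (Fin M) (Fin M) ℝ)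
    (hMψ : Mψ = gram M ψ (fun α => h₀ ^ 2 * We α + Wu α + WΔu α))
    (hQψ : Qψ = Mψ⁻¹ * gram M ψ (fun α => h₀ ^ 2 * We α + WΔu α))
    (hLψ : Lψ = Mψ⁻¹ * gram M ψ (fun α => h₀ * We α))
    (θstar : Fin M → ℝ)
    (hfix : θstar = Qψ *ᵥ θstar + Lψ *ᵥ (c - h₀ • θstar))
    (θ : ℕ → Fin M → ℝ)
    (hθ : ∀ j, θ (j + 1) = Qψ *ᵥ θ j + Lψ *ᵥ (c - h₀ • θ j)) (j : ℕ) :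
    √((θ (j + 1) - θstar) ⬝ᵥ (Mψ *ᵥ (θ (j + 1) - θstar))) ≤
        √((θ j - θstar) ⬝ᵥ (Mψ *ᵥ (θ j - θstar))) ∧
      (θ j ≠ θstar →
        √((θ (j + 1) - θstar) ⬝ᵥ (Mψ *ᵥ (θ (j + 1) - θstar))) <
          √((θ j - θstar) ⬝ᵥ (Mψ *ᵥ (θ j - θstar)))) := by
  have hAc := (hWec.const_mul (h₀ ^ 2)).add hWuc
  have hA := gram_posDef hψ hli hAc hpos
  have hD := gram_posSemidef hψ hWΔc hWΔ
  have hM := hMψ.trans (gram_add hψ hAc hWΔc)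
  have hMpos : Mψ.PosDef := hM ▸ hA.add_posSemidef hD
  have herror : θ (j + 1) - θstar = (Mψ⁻¹ * gram M ψ WΔu) *ᵥ (θ j - θstar) := by
    rw [← mul_gram_sub_smul_mul_gram Mψ⁻¹ h₀ hψ hWec hWΔc, ← hQψ, ← hLψ,
      ← affine_feedback_sub_affine_feedback Qψ Lψ h₀ c, ← hθ, ← hfix]
  have hstep : Mψ *ᵥ (θ (j + 1) - θstar) = gram M ψ WΔu *ᵥ (θ j - θstar) := by
    rw [herror, mulVec_mulVec,
      mul_nonsing_inv_cancel_left _ _ ((isUnit_iff_isUnit_det _).mp hMpos.isUnit)]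
  have hnonneg := hMpos.posSemidef.dotProduct_mulVec_nonneg (θ (j + 1) - θstar)
  rw [hM] at hstep hnonneg ⊢
  exact ⟨Real.sqrt_le_sqrt (star_dotProduct_add_mulVec_le_of_mulVec_eq hA.posSemidef hD hstep),
    fun hne => Real.sqrt_lt_sqrt hnonneg
      (star_dotProduct_add_mulVec_lt_of_mulVec_eq hA hD hstep (sub_ne_zero.mpr hne))⟩

/-- **Monotonicity part of Theorem 3 of the paper.** The ILC parameter iterates
converge monotonically to the fixed point `θ*` in the weighted norm
`‖x‖_{M_ψ} = √(xᵀ M_ψ x)`, with strict decrease whenever `θ_j ≠ θ*`. -/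
theorem ilc_monotonic_convergence (M : ℕ) (ψ : Fin M → ℝ → ℝ)
    (hcont : ∀ k, Continuous (ψ k))
    (hli : ∀ x : Fin M → ℝ,
      (∀ α ∈ Set.Icc (0:ℝ) (2 * Real.pi), ∑ k, x k * ψ k α = 0) → x = 0)
    (h₀ : ℝ) (hh₀ : 0 < h₀)
    (We Wu WΔu : ℝ → ℝ)
    (hWec : Continuous We) (hWuc : Continuous Wu) (hWΔc : Continuous WΔu)
    (hWe : ∀ α, 0 ≤ We α) (hWu : ∀ α, 0 ≤ Wu α) (hWΔ : ∀ α, 0 ≤ WΔu α)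
    (hpos : (∀ α ∈ Set.Icc (0:ℝ) (2 * Real.pi), 0 < We α) ∨
            (∀ α ∈ Set.Icc (0:ℝ) (2 * Real.pi), 0 < Wu α))
    (c : Fin M → ℝ)
    (Mψ Qψ Lψ : Matrix (Fin M) (Fin M) ℝ)
    (hMψ : Mψ = gram M ψ (fun α => h₀ ^ 2 * We α + Wu α + WΔu α))
    (hQψ : Qψ = Mψ⁻¹ * gram M ψ (fun α => h₀ ^ 2 * We α + WΔu α))
    (hLψ : Lψ = Mψ⁻¹ * gram M ψ (fun α => h₀ * We α))
    (θstar : Fin M → ℝ)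
    (hfix : θstar = Qψ *ᵥ θstar + Lψ *ᵥ (c - h₀ • θstar))
    (θ : ℕ → Fin M → ℝ)
    (hθ : ∀ j, θ (j + 1) = Qψ *ᵥ θ j + Lψ *ᵥ (c - h₀ • θ j)) :
    ∀ j : ℕ,
      Real.sqrt ((θ (j + 1) - θstar) ⬝ᵥ (Mψ *ᵥ (θ (j + 1) - θstar))) ≤
        Real.sqrt ((θ j - θstar) ⬝ᵥ (Mψ *ᵥ (θ j - θstar))) ∧
      (θ j ≠ θstar →
        Real.sqrt ((θ (j + 1) - θstar) ⬝ᵥ (Mψ *ᵥ (θ (j + 1) - θstar))) <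
          Real.sqrt ((θ j - θstar) ⬝ᵥ (Mψ *ᵥ (θ j - θstar)))) := by
  exact ilc_monotonic_convergence_general M ψ (fun k => (hcont k).continuousOn) hli h₀ We Wu WΔu
    hWec.continuousOn hWuc.continuousOn hWΔc.continuousOn
    (fun α hα => mul_add_pos_of_pos_or_pos (pow_pos hh₀ 2) (hWe α) (hWu α)
      (hpos.imp (fun h => h α hα) fun h => h α hα))
    (fun α _ => hWΔ α) c Mψ Qψ Lψ hMψ hQψ hLψ θstar hfix θ hθ
end

section
/- Let ψ₁,…,ψ_M : ℝ → ℝ be continuous and linearly independent on [0,2π], h₀ > 0, W_u ≡ 0, and let W_e, W_{Δu} : ℝ → ℝ be continuous nonnegative weights with W_e(α) > 0 for all α ∈ [0,2π]. Then the unique fixed point of the iteration θ_{j+1} = Q_ψ θ_j + L_ψ (c − h₀ θ_j) is θ* = c/h₀; consequently the limiting error parameter vector θ^{e*} = c − h₀θ* equals 0, i.e., the converged input perfectly compensates the commutation-angle-domain repeating disturbance and the limiting parameterized error e*(α) = ψ(α)ᵀθ^{e*} vanishes for every α. -/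
open Matrix Finset intervalIntegral

/-!
The quadratic form of the Gram matrix `G(w)` is `x ↦ ∫ w (∑ₖ xₖ ψₖ)²`. If `w > 0` almost
everywhere, it vanishes only when `∑ₖ xₖ ψₖ = 0` almost everywhere, hence everywhere on `[0, 2π]`
by continuity, so `G(w)` is positive definite. Thus `M_ψ` and `G(h₀ W_e) = h₀ G(W_e)` are
invertible: `Q_ψ = 1`, and the fixed point equation reduces to `L_ψ (c - h₀ θ) = 0` with `L_ψ`
invertible.
-/

theorem mul_sum_mul_sq {ι R : Type*} [Fintype ι] [CommSemiring R] (r : R) (x y : ι → R) :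
    r * (∑ k, x k * y k) ^ 2 = ∑ k, ∑ l, x k * (r * y k * y l * x l) := by
  rw [sq, sum_mul_sum, mul_sum]
  refine sum_congr rfl fun k _ => ?_
  rw [mul_sum]
  exact sum_congr rfl fun l _ => by ring

section FixedPoint

variable {n K : Type*} [Fintype n] [DecidableEq n] [Field K]

theorem eq_inv_mul_mulVec_add_iff {A B : Matrix n n K} (hA : IsUnit A) (hB : IsUnit B)
    {h : K} (hh : h ≠ 0) (c θ : n → K) :
    θ = (A⁻¹ * A) *ᵥ θ + (A⁻¹ * B) *ᵥ (c - h • θ) ↔ θ = h⁻¹ • c := by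
  have hL : Function.Injective (A⁻¹ * B).mulVec :=
    mulVec_injective_of_isUnit ((isUnit_nonsing_inv_iff.2 hA).mul hB)
  calc θ = (A⁻¹ * A) *ᵥ θ + (A⁻¹ * B) *ᵥ (c - h • θ)
      ↔ (A⁻¹ * B) *ᵥ (c - h • θ) = 0 := by
        rw [nonsing_inv_mul A ((isUnit_iff_isUnit_det A).1 hA), one_mulVec, left_eq_add]
    _ ↔ c - h • θ = 0 := hL.eq_iff' (mulVec_zero _)
    _ ↔ θ = h⁻¹ • c := by rw [sub_eq_zero, eq_comm, eq_inv_smul_iff₀ hh]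

end FixedPoint

section WeightedGram

open MeasureTheory

variable {X ι : Type*} {mX : MeasurableSpace X} {μ : Measure X} {ψ : ι → X → ℝ} {w : X → ℝ}

/-- The Gram matrix of the functions `ψ` in `L²(w dμ)`, for an arbitrary measure `μ`. The weight is
kept as a real factor of the integrand, as in `gram`, and so may take negative values. -/
noncomputable def weightedGram (μ : Measure X) (ψ : ι → X → ℝ) (w : X → ℝ) : Matrix ι ι ℝ :=
  Matrix.of fun k l => ∫ a, w a * ψ k a * ψ l a ∂μ

theorem isHermitian_weightedGram : (weightedGram μ ψ w).IsHermitian := by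
  ext k l
  simp only [weightedGram, conjTranspose_apply, of_apply, star_trivial, mul_right_comm]

theorem weightedGram_const_mul (r : ℝ) :
    weightedGram μ ψ (fun a => r * w a) = r • weightedGram μ ψ w := by
  ext k l
  simp only [weightedGram, of_apply, Matrix.smul_apply, smul_eq_mul, mul_assoc,
    MeasureTheory.integral_const_mul]

variable [Fintype ι]

theorem integrable_mul_sum_sq (hint : ∀ k l, Integrable (fun a => w a * ψ k a * ψ l a) μ)
    (x : ι → ℝ) : Integrable (fun a => w a * (∑ k, x k * ψ k a) ^ 2) μ := by
  simp only [mul_sum_mul_sq]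
  exact integrable_finsetSum _ fun k _ => integrable_finsetSum _ fun l _ =>
    ((hint k l).mul_const _).const_mul _

theorem dotProduct_weightedGram_mulVec
    (hint : ∀ k l, Integrable (fun a => w a * ψ k a * ψ l a) μ) (x : ι → ℝ) :
    x ⬝ᵥ weightedGram μ ψ w *ᵥ x = ∫ a, w a * (∑ k, x k * ψ k a) ^ 2 ∂μ := by
  have hterm (k l : ι) : Integrable (fun a => x k * (w a * ψ k a * ψ l a * x l)) μ :=
    ((hint k l).mul_const _).const_mul _
  simp only [mul_sum_mul_sq]
  rw [integral_finsetSum _ fun k _ => integrable_finsetSum _ fun l _ => hterm k l]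
  refine sum_congr rfl fun k _ => ?_
  rw [integral_finsetSum _ fun l _ => hterm k l]
  simp only [mulVec, dotProduct, weightedGram, of_apply, mul_sum,
    MeasureTheory.integral_const_mul, MeasureTheory.integral_mul_const]

theorem posDef_weightedGram (hint : ∀ k l, Integrable (fun a => w a * ψ k a * ψ l a) μ)
    (hw : ∀ᵐ a ∂μ, 0 < w a)
    (hψ : ∀ x : ι → ℝ, (∀ᵐ a ∂μ, ∑ k, x k * ψ k a = 0) → x = 0) :
    (weightedGram μ ψ w).PosDef := by
  refine .of_dotProduct_mulVec_pos isHermitian_weightedGram fun x hx => ?_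
  have hnonneg : 0 ≤ᵐ[μ] fun a => w a * (∑ k, x k * ψ k a) ^ 2 := by
    filter_upwards [hw] with a ha using mul_nonneg ha.le (sq_nonneg _)
  rw [star_trivial, dotProduct_weightedGram_mulVec hint]
  refine (integral_nonneg_of_ae hnonneg).lt_of_ne' fun hzero => hx (hψ x ?_)
  rw [integral_eq_zero_iff_of_nonneg_ae hnonneg (integrable_mul_sum_sq hint x)] at hzero
  filter_upwards [hw, hzero] with a ha hzero_a
  exact pow_eq_zero_iff two_ne_zero |>.1 ((mul_eq_zero.1 hzero_a).resolve_left ha.ne')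

variable [TopologicalSpace X] [T2Space X] [OpensMeasurableSpace X] [μ.IsOpenPosMeasure]

theorem posDef_weightedGram_restrict {s : Set X} (hs : IsCompact s)
    (hs_closure : s ⊆ closure (interior s)) (hψc : ∀ k, ContinuousOn (ψ k) s)
    (hψ : ∀ x : ι → ℝ, (∀ a ∈ s, ∑ k, x k * ψ k a = 0) → x = 0)
    (hwi : IntegrableOn w s μ) (hw : ∀ᵐ a ∂μ.restrict s, 0 < w a) :
    (weightedGram (μ.restrict s) ψ w).PosDef := by
  refine posDef_weightedGram
    (fun k l => (hwi.mul_continuousOn (hψc k) hs).mul_continuousOn (hψc l) hs) hw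
    fun x hx => hψ x ?_
  exact Measure.eqOn_of_ae_eq hx
    (continuousOn_finsetSum _ fun k _ => continuousOn_const.mul (hψc k)) continuousOn_const
    hs_closure

end WeightedGram

section Compensation

open MeasureTheory Set Real

theorem gram_eq_weightedGram (M : ℕ) (ψ : Fin M → ℝ → ℝ) (w : ℝ → ℝ) :
    gram M ψ w = weightedGram (volume.restrict (Icc 0 (2 * π))) ψ w := by
  ext k l
  simp only [_root_.gram, weightedGram, of_apply, integral_of_le two_pi_pos.le,
    integral_Icc_eq_integral_Ioc]

theorem isUnit_gram {M : ℕ} {ψ : Fin M → ℝ → ℝ} (hψc : ∀ k, ContinuousOn (ψ k) (Icc 0 (2 * π)))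
    (hψ : ∀ x : Fin M → ℝ, (∀ α ∈ Icc 0 (2 * π), ∑ k, x k * ψ k α = 0) → x = 0)
    {w : ℝ → ℝ} (hwi : IntegrableOn w (Icc 0 (2 * π)))
    (hw : ∀ᵐ α ∂volume.restrict (Icc 0 (2 * π)), 0 < w α) : IsUnit (gram M ψ w) := by
  rw [gram_eq_weightedGram]
  exact (posDef_weightedGram_restrict isCompact_Icc
    (closure_interior_Icc two_pi_pos.ne).symm.subset hψc hψ hwi hw).isUnit

theorem ilc_perfect_compensation_general (M : ℕ) (ψ : Fin M → ℝ → ℝ)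
    (hψc : ∀ k, ContinuousOn (ψ k) (Icc 0 (2 * π)))
    (hψ : ∀ x : Fin M → ℝ, (∀ α ∈ Icc 0 (2 * π), ∑ k, x k * ψ k α = 0) → x = 0)
    {h₀ : ℝ} (hh₀ : h₀ ≠ 0) {We WΔu : ℝ → ℝ}
    (hWei : IntegrableOn We (Icc 0 (2 * π))) (hWΔi : IntegrableOn WΔu (Icc 0 (2 * π)))
    (hWe : ∀ᵐ α ∂volume.restrict (Icc 0 (2 * π)), 0 < We α)
    (hWΔ : ∀ᵐ α ∂volume.restrict (Icc 0 (2 * π)), 0 ≤ WΔu α) (c : Fin M → ℝ) :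
    let Mψ := gram M ψ (fun α => h₀ ^ 2 * We α + WΔu α)
    let Qψ := Mψ⁻¹ * gram M ψ (fun α => h₀ ^ 2 * We α + WΔu α)
    let Lψ := Mψ⁻¹ * gram M ψ (fun α => h₀ * We α)
    (∀ θstar : Fin M → ℝ,
        θstar = Qψ *ᵥ θstar + Lψ *ᵥ (c - h₀ • θstar) ↔ θstar = h₀⁻¹ • c) ∧
    c - h₀ • (h₀⁻¹ • c) = 0 ∧
    ∀ α : ℝ, ∑ k, ψ k α * (c - h₀ • (h₀⁻¹ • c)) k = 0 := by
  intro Mψ Qψ Lψ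
  have hMψ : IsUnit Mψ := by
    refine isUnit_gram hψc hψ ((hWei.const_mul _).add hWΔi) ?_
    filter_upwards [hWe, hWΔ] with α hα hΔα
    positivity
  have hGe : IsUnit (gram M ψ fun α => h₀ * We α) := by
    rw [gram_eq_weightedGram, weightedGram_const_mul, ← gram_eq_weightedGram]
    exact (isUnit_gram hψc hψ hWei hWe).smul (Units.mk0 h₀ hh₀)
  have herror : c - h₀ • (h₀⁻¹ • c) = 0 := by rw [smul_inv_smul₀ hh₀, sub_self]
  refine ⟨eq_inv_mul_mulVec_add_iff hMψ hGe hh₀ c, herror, fun α => ?_⟩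
  simp only [herror, Pi.zero_apply, mul_zero, sum_const_zero]

end Compensation

/-- **Perfect compensation by the converged ILC input.** With `W_u ≡ 0` and
`W_e` pointwise positive, the unique fixed point of the ILC iteration is
`θ* = c / h₀`, so the limiting error parameter vector `θ^{e*} = c - h₀ θ*`
vanishes, and with it the limiting parameterized error `e*(α) = ψ(α)ᵀ θ^{e*}`
for every `α`. -/
theorem ilc_perfect_compensation (M : ℕ) (ψ : Fin M → ℝ → ℝ)
    (hcont : ∀ k, Continuous (ψ k))
    (hli : ∀ x : Fin M → ℝ,
      (∀ α ∈ Set.Icc (0:ℝ) (2 * Real.pi), ∑ k, x k * ψ k α = 0) → x = 0)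
    (h₀ : ℝ) (hh₀ : 0 < h₀)
    (We WΔu : ℝ → ℝ)
    (hWec : Continuous We) (hWΔc : Continuous WΔu)
    (hWe : ∀ α, 0 ≤ We α) (hWΔ : ∀ α, 0 ≤ WΔu α)
    (hWepos : ∀ α ∈ Set.Icc (0:ℝ) (2 * Real.pi), 0 < We α)
    (c : Fin M → ℝ) :
    let Mψ := gram M ψ (fun α => h₀ ^ 2 * We α + WΔu α)
    let Qψ := Mψ⁻¹ * gram M ψ (fun α => h₀ ^ 2 * We α + WΔu α)
    let Lψ := Mψ⁻¹ * gram M ψ (fun α => h₀ * We α)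
    (∀ θstar : Fin M → ℝ,
        θstar = Qψ *ᵥ θstar + Lψ *ᵥ (c - h₀ • θstar) ↔ θstar = h₀⁻¹ • c) ∧
    c - h₀ • (h₀⁻¹ • c) = 0 ∧
    ∀ α : ℝ, ∑ k, ψ k α * (c - h₀ • (h₀⁻¹ • c)) k = 0 := by
  exact ilc_perfect_compensation_general M ψ (fun k => (hcont k).continuousOn) hli hh₀.ne'
    hWec.integrableOn_Icc hWΔc.integrableOn_Icc
    (MeasureTheory.ae_restrict_of_forall_mem measurableSet_Icc hWepos) (.of_forall hWΔ) c
end
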